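/- arXiv:1902.01158 — 3 statements merged into one kernel-verified Lean document; each statement's English description precedes it below -/
import Mathlib

section
/- Suppose r₁, r₂, r₃, r₄ > 0 and t₁ < t₂ < t₃ < t₄ are real numbers, and consider the four circles Cᵢ in ℝ² with centers (tᵢ, rᵢ) and radii rᵢ (each tangent to the x-axis from above at (tᵢ,0)). Assume that C₁ is externally tangent to C₂ and to C₄, and that C₃ is externally tangent to C₂ and to C₄ (distance between centers equals sum of radii in each case). Then (t₃ − t₂)·(t₄ − t₁) = (t₂ − t₁)·(t₄ − t₃). -/
/-- The point `(x, y)` in the Euclidean plane `ℝ²` (with the Euclidean distance). -/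
noncomputable def pt (x y : ℝ) : EuclideanSpace ℝ (Fin 2) :=
  (WithLp.equiv 2 (Fin 2 → ℝ)).symm ![x, y]

theorem dist_pt_sq (a r b s : ℝ) : dist (pt a r) (pt b s) ^ 2 = (a - b) ^ 2 + (r - s) ^ 2 := by
  simp [EuclideanSpace.dist_sq_eq, pt, Real.dist_eq]

theorem sub_sq_eq_of_dist_pt_eq_add {a r b s : ℝ} (h : dist (pt a r) (pt b s) = r + s) :
    (a - b) ^ 2 = 4 * r * s := by
  have h_sq : (r + s) ^ 2 = (a - b) ^ 2 + (r - s) ^ 2 := h ▸ dist_pt_sq a r b s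
  linear_combination -h_sq

theorem gap_product_eq_general {r₁ r₂ r₃ r₄ t₁ t₂ t₃ t₄ : ℝ}
    (htan₁₂ : dist (pt t₁ r₁) (pt t₂ r₂) = r₁ + r₂)
    (htan₁₄ : dist (pt t₁ r₁) (pt t₄ r₄) = r₁ + r₄)
    (htan₃₂ : dist (pt t₃ r₃) (pt t₂ r₂) = r₃ + r₂)
    (htan₃₄ : dist (pt t₃ r₃) (pt t₄ r₄) = r₃ + r₄) :
    |(t₃ - t₂) * (t₄ - t₁)| = |(t₂ - t₁) * (t₄ - t₃)| := by
  refine (sq_eq_sq_iff_abs_eq_abs _ _).mp ?_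
  calc ((t₃ - t₂) * (t₄ - t₁)) ^ 2
      = (t₃ - t₂) ^ 2 * (t₁ - t₄) ^ 2 := by ring
    _ = (4 * r₃ * r₂) * (4 * r₁ * r₄) := by
      rw [sub_sq_eq_of_dist_pt_eq_add htan₃₂, sub_sq_eq_of_dist_pt_eq_add htan₁₄]
    _ = (4 * r₁ * r₂) * (4 * r₃ * r₄) := by ring
    _ = (t₁ - t₂) ^ 2 * (t₃ - t₄) ^ 2 := by
      rw [sub_sq_eq_of_dist_pt_eq_add htan₁₂, sub_sq_eq_of_dist_pt_eq_add htan₃₄]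
    _ = ((t₂ - t₁) * (t₄ - t₃)) ^ 2 := by ring

/-- Lemma 2(i): for four circles tangent to the x-axis from above at `t₁ < t₂ < t₃ < t₄`
with `C₁` tangent to `C₂, C₄` and `C₃` tangent to `C₂, C₄`, we have `m·n = ℓ·r`. -/
theorem gap_product_eq (r₁ r₂ r₃ r₄ t₁ t₂ t₃ t₄ : ℝ)
    (hr₁ : 0 < r₁) (hr₂ : 0 < r₂) (hr₃ : 0 < r₃) (hr₄ : 0 < r₄)
    (h₁₂ : t₁ < t₂) (h₂₃ : t₂ < t₃) (h₃₄ : t₃ < t₄)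
    (htan₁₂ : dist (pt t₁ r₁) (pt t₂ r₂) = r₁ + r₂)
    (htan₁₄ : dist (pt t₁ r₁) (pt t₄ r₄) = r₁ + r₄)
    (htan₃₂ : dist (pt t₃ r₃) (pt t₂ r₂) = r₃ + r₂)
    (htan₃₄ : dist (pt t₃ r₃) (pt t₄ r₄) = r₃ + r₄) :
    (t₃ - t₂) * (t₄ - t₁) = (t₂ - t₁) * (t₄ - t₃) := by
  have h₁₄ : t₁ < t₄ := h₁₂.trans (h₂₃.trans h₃₄)
  simpa only [abs_mul, abs_of_pos, sub_pos, h₁₂, h₂₃, h₃₄, h₁₄] using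
    gap_product_eq_general htan₁₂ htan₁₄ htan₃₂ htan₃₄
end

section
/- Suppose r₁, r₂, r₃, r₄ > 0 and t₁ < t₂ < t₃ < t₄ are real numbers, and consider the four circles Cᵢ in ℝ² with centers (tᵢ, rᵢ) and radii rᵢ (each tangent to the x-axis from above at (tᵢ,0)). Assume that C₁ is externally tangent to C₂ and to C₄, and that C₃ is externally tangent to C₂ and to C₄. Then t₃ − t₂ = f(t₂ − t₁, t₄ − t₃), where f(ℓ, r) = (−(ℓ + r) + √((ℓ + r)² + 4·ℓ·r))/2. That is, the middle gap m = t₃ − t₂ is determined by the outer gaps ℓ = t₂ − t₁ and r = t₄ − t₃. -/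
/-!
Externally tangent circles of radii `x` and `y` resting on a line touch it at points whose squared
distance is `4 * x * y`. Hence, around a 4-cycle of tangencies, the squared distances of either pair
of opposite edges multiply to `16 * r₁ * r₂ * r₃ * r₄`. For the gaps `ℓ, m, r` this reads
`ℓ * r = m * (ℓ + m + r)`, a quadratic equation with `m` as its larger root.
-/

theorem sq_dist_pt (a b x y : ℝ) :
    dist (pt a x) (pt b y) ^ 2 = (a - b) ^ 2 + (x - y) ^ 2 := by
  simp [EuclideanSpace.dist_sq_eq, pt, Real.dist_eq]

theorem sq_sub_eq_of_dist_pt_eq_add {a b x y : ℝ} (h : dist (pt a x) (pt b y) = x + y) :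
    (a - b) ^ 2 = 4 * x * y := by
  have hsq := sq_dist_pt a b x y
  rw [h] at hsq
  linarith

theorem abs_sub_mul_sub_eq_of_tangent_cycle {r₁ r₂ r₃ r₄ t₁ t₂ t₃ t₄ : ℝ}
    (h₁₂ : dist (pt t₁ r₁) (pt t₂ r₂) = r₁ + r₂)
    (h₁₄ : dist (pt t₁ r₁) (pt t₄ r₄) = r₁ + r₄)
    (h₃₂ : dist (pt t₃ r₃) (pt t₂ r₂) = r₃ + r₂)
    (h₃₄ : dist (pt t₃ r₃) (pt t₄ r₄) = r₃ + r₄) :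
    |(t₁ - t₂) * (t₃ - t₄)| = |(t₃ - t₂) * (t₁ - t₄)| := by
  rw [← sq_eq_sq_iff_abs_eq_abs, mul_pow, mul_pow, sq_sub_eq_of_dist_pt_eq_add h₁₂,
    sq_sub_eq_of_dist_pt_eq_add h₁₄, sq_sub_eq_of_dist_pt_eq_add h₃₂,
    sq_sub_eq_of_dist_pt_eq_add h₃₄]
  ring

theorem eq_neg_add_sqrt_div_two_of_mul_eq {l m r : ℝ} (h : l * r = m * (l + m + r))
    (hm : 0 ≤ 2 * m + (l + r)) :
    m = (-(l + r) + √((l + r) ^ 2 + 4 * l * r)) / 2 := by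
  have hdiscrim : (l + r) ^ 2 + 4 * l * r = (2 * m + (l + r)) ^ 2 := by
    linear_combination 4 * h
  rw [hdiscrim, Real.sqrt_sq hm]
  ring

/-- Lemma 2(ii): the middle gap `m = t₃ - t₂` is determined by the outer gaps
`ℓ = t₂ - t₁` and `r = t₄ - t₃` via `m = f(ℓ, r) = (-(ℓ+r) + √((ℓ+r)² + 4ℓr))/2`. -/
theorem middle_gap_eq (r₁ r₂ r₃ r₄ t₁ t₂ t₃ t₄ : ℝ)
    (hr₁ : 0 < r₁) (hr₂ : 0 < r₂) (hr₃ : 0 < r₃) (hr₄ : 0 < r₄)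
    (h₁₂ : t₁ < t₂) (h₂₃ : t₂ < t₃) (h₃₄ : t₃ < t₄)
    (htan₁₂ : dist (pt t₁ r₁) (pt t₂ r₂) = r₁ + r₂)
    (htan₁₄ : dist (pt t₁ r₁) (pt t₄ r₄) = r₁ + r₄)
    (htan₃₂ : dist (pt t₃ r₃) (pt t₂ r₂) = r₃ + r₂)
    (htan₃₄ : dist (pt t₃ r₃) (pt t₄ r₄) = r₃ + r₄) :
    t₃ - t₂ = (-((t₂ - t₁) + (t₄ - t₃)) +
      Real.sqrt (((t₂ - t₁) + (t₄ - t₃)) ^ 2 + 4 * (t₂ - t₁) * (t₄ - t₃))) / 2 := by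
  have habs := abs_sub_mul_sub_eq_of_tangent_cycle htan₁₂ htan₁₄ htan₃₂ htan₃₄
  have h₁₄ : t₁ < t₄ := h₁₂.trans (h₂₃.trans h₃₄)
  rw [abs_of_pos (mul_pos_of_neg_of_neg (sub_neg.2 h₁₂) (sub_neg.2 h₃₄)),
    abs_of_neg (mul_neg_of_pos_of_neg (sub_pos.2 h₂₃) (sub_neg.2 h₁₄))] at habs
  apply eq_neg_add_sqrt_div_two_of_mul_eq
  · linear_combination habs
  · linarith
end

section
/- The function f(ℓ, r) = (−(ℓ + r) + √((ℓ + r)² + 4·ℓ·r))/2 is strictly increasing in each variable on positive reals: for every fixed r > 0, if 0 < ℓ₁ < ℓ₂ then f(ℓ₁, r) < f(ℓ₂, r); and for every fixed ℓ > 0, if 0 < r₁ < r₂ then f(ℓ, r₁) < f(ℓ, r₂). -/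
/-!
Completing the square in `ℓ` turns the radicand `(ℓ + r)² + 4ℓr` into `(ℓ + 3r)² - 8r²`. Up to an
affine change of variable, `f(·, r)` is therefore `x ↦ √(x² - c) - x` with `c = 8r² > 0`, which is
strictly increasing on `[√c, ∞)` because `√(x² - c) < x` there. Symmetry of `f` gives the other
variable.
-/

open Set

theorem strictMonoOn_sqrt_sq_sub_sub_self {c : ℝ} (hc : 0 < c) :
    StrictMonoOn (fun x ↦ √(x ^ 2 - c) - x) (Ici √c) := by
  intro x hx y _ hxy
  have hx_pos : 0 < x := (Real.sqrt_pos.2 hc).trans_le hx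
  have hcx : 0 ≤ x ^ 2 - c := sub_nonneg.2 ((Real.sqrt_le_left hx_pos.le).1 hx)
  have sqrt_lt : √(x ^ 2 - c) < x := (Real.sqrt_lt' hx_pos).2 (sub_lt_self _ hc)
  have shift_lt : √(x ^ 2 - c) + (y - x) < √(y ^ 2 - c) := by
    apply Real.lt_sqrt_of_sq_lt
    calc (√(x ^ 2 - c) + (y - x)) ^ 2
        = √(x ^ 2 - c) ^ 2 + 2 * (y - x) * √(x ^ 2 - c) + (y - x) ^ 2 := by ring
      _ < √(x ^ 2 - c) ^ 2 + 2 * (y - x) * x + (y - x) ^ 2 := by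
        have : 0 < y - x := sub_pos.2 hxy
        gcongr
      _ = y ^ 2 - c := by rw [Real.sq_sqrt hcx]; ring
  dsimp only
  linarith

/-- The paper's `f(ℓ, r)`, the larger root of `x² + (ℓ + r)x - ℓr`, given by the quadratic formula.
The square root takes the junk value `0` where the discriminant is negative. -/
noncomputable def largerRoot (ℓ r : ℝ) : ℝ :=
  (-(ℓ + r) + √((ℓ + r) ^ 2 + 4 * ℓ * r)) / 2

theorem largerRoot_comm (ℓ r : ℝ) : largerRoot ℓ r = largerRoot r ℓ := by
  rw [largerRoot, largerRoot, add_comm ℓ r, mul_right_comm 4 ℓ r]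

theorem largerRoot_eq_sqrt_sq_sub_sub_self (ℓ r : ℝ) :
    largerRoot ℓ r = (√((ℓ + 3 * r) ^ 2 - 8 * r ^ 2) - (ℓ + 3 * r)) / 2 + r := by
  have completed_square : (ℓ + r) ^ 2 + 4 * ℓ * r = (ℓ + 3 * r) ^ 2 - 8 * r ^ 2 := by ring
  rw [largerRoot, completed_square]
  ring

-- The left endpoint is the larger zero of the discriminant `(ℓ + r)² + 4ℓr` in `ℓ`.
theorem strictMonoOn_largerRoot_left {r : ℝ} (hr : r ≠ 0) :
    StrictMonoOn (fun ℓ ↦ largerRoot ℓ r) (Ici (√(8 * r ^ 2) - 3 * r)) := by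
  intro ℓ₁ h₁ ℓ₂ h₂ hlt
  have h₁' : ℓ₁ + 3 * r ∈ Ici √(8 * r ^ 2) := mem_Ici.2 (sub_le_iff_le_add.1 h₁)
  have h₂' : ℓ₂ + 3 * r ∈ Ici √(8 * r ^ 2) := mem_Ici.2 (sub_le_iff_le_add.1 h₂)
  simp only [largerRoot_eq_sqrt_sq_sub_sub_self]
  gcongr ?_ / 2 + r
  exact strictMonoOn_sqrt_sq_sub_sub_self (by positivity) h₁' h₂' (by gcongr)

theorem Ioi_zero_subset_Ici_sqrt_sub {r : ℝ} (hr : 0 ≤ r) :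
    Ioi 0 ⊆ Ici (√(8 * r ^ 2) - 3 * r) := by
  have sqrt_le : √(8 * r ^ 2) ≤ 3 * r :=
    (Real.sqrt_le_left (by positivity)).2 (by linarith [sq_nonneg r])
  exact fun ℓ hℓ ↦ (sub_nonpos.2 sqrt_le).trans (le_of_lt hℓ)

theorem f_strictMono_each_general :
    (∀ r : ℝ, r ≠ 0 →
      StrictMonoOn (fun ℓ ↦ largerRoot ℓ r) (Ici (√(8 * r ^ 2) - 3 * r))) ∧
    (∀ ℓ : ℝ, ℓ ≠ 0 →
      StrictMonoOn (fun r ↦ largerRoot ℓ r) (Ici (√(8 * ℓ ^ 2) - 3 * ℓ))) := by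
  refine ⟨fun _ ↦ strictMonoOn_largerRoot_left, fun ℓ hℓ ↦ ?_⟩
  simpa only [largerRoot_comm ℓ] using strictMonoOn_largerRoot_left hℓ

/-- Lemma 2(iii): `f(ℓ, r) = (-(ℓ+r) + √((ℓ+r)² + 4ℓr))/2` is strictly increasing in
each variable on the positive reals. -/
theorem f_strictMono_each :
    (∀ r : ℝ, 0 < r → ∀ ℓ₁ ℓ₂ : ℝ, 0 < ℓ₁ → ℓ₁ < ℓ₂ →
      (-(ℓ₁ + r) + Real.sqrt ((ℓ₁ + r) ^ 2 + 4 * ℓ₁ * r)) / 2 <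
        (-(ℓ₂ + r) + Real.sqrt ((ℓ₂ + r) ^ 2 + 4 * ℓ₂ * r)) / 2) ∧
    (∀ ℓ : ℝ, 0 < ℓ → ∀ r₁ r₂ : ℝ, 0 < r₁ → r₁ < r₂ →
      (-(ℓ + r₁) + Real.sqrt ((ℓ + r₁) ^ 2 + 4 * ℓ * r₁)) / 2 <
        (-(ℓ + r₂) + Real.sqrt ((ℓ + r₂) ^ 2 + 4 * ℓ * r₂)) / 2) := by
  constructor
  · exact fun r hr _ _ h₁ hlt ↦ (f_strictMono_each_general.1 r hr.ne').mono
      (Ioi_zero_subset_Ici_sqrt_sub hr.le) h₁ (h₁.trans hlt) hlt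
  · exact fun ℓ hℓ _ _ h₁ hlt ↦ (f_strictMono_each_general.2 ℓ hℓ.ne').mono
      (Ioi_zero_subset_Ici_sqrt_sub hℓ.le) h₁ (h₁.trans hlt) hlt
end
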